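/- Let d ≥ 5. For y, x ∈ Z^d and n ≥ 1, let F(y,x,n) be the event that simple random walk S^y started at y hits x in finite time and the chronological loop erasure of S^y stopped at its first hit of x has at most n steps. Then there exist constants C, c > 0 depending only on d such that for every x, y ∈ Z^d and n ≥ 1, P( F(y,x,n) ) ≤ C (1 + |x-y|)^{2-d} exp( -c |x-y|² / n ), where |x-y| denotes Euclidean distance. -/

import Mathlib

open MeasureTheory
open scoped ENNReal Classical

namespace USFPaper

/-- Vertices of the nearest-neighbour integer lattice `ℤ^d`. -/
abbrev V (d : ℕ) := Fin d → ℤ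

variable {d : ℕ}

/-- Nearest-neighbour adjacency in `ℤ^d`. -/
def adj (x y : V d) : Prop := (∑ i, |x i - y i|) = 1

/-- The cube `Q(x,r) = { y : ‖x - y‖_∞ ≤ r }`. -/
def cube (x : V d) (r : ℕ) : Set (V d) := { y | ∀ i, |y i - x i| ≤ (r : ℤ) }

/-- Inner boundary `∂ᵢA` of a set `A`. -/
def innerBdry (A : Set (V d)) : Set (V d) := { x | x ∈ A ∧ ∃ y, adj x y ∧ y ∉ A }

/-- Euclidean distance on `ℤ^d`. -/
noncomputable def eudist (x y : V d) : ℝ := Real.sqrt (∑ i, ((x i : ℝ) - (y i : ℝ)) ^ 2)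

/-- The `k`-th coordinate unit vector. -/
def unitVec (k : ℕ) : V d := fun i => if (i : ℕ) = k then 1 else 0

/-- `μ` is the law of simple random walk on `ℤ^d` started at `x`, as a probability
measure on path space: every nearest-neighbour cylinder of length `n` starting at `x`
has probability `(2d)⁻ⁿ`. -/
def IsSRWLaw (μ : Measure (ℕ → V d)) (x : V d) : Prop :=
  IsProbabilityMeasure μ ∧
  ∀ (n : ℕ) (γ : ℕ → V d), γ 0 = x → (∀ i < n, adj (γ i) (γ (i + 1))) →
    μ { ω | ∀ i ≤ n, ω i = γ i } = (2 * (d : ℝ≥0∞))⁻¹ ^ n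

/-- First exit time `τ_A` from `A`, valued in `ℕ∞` (`⊤` if the path never leaves `A`). -/
noncomputable def exitTimeE (A : Set (V d)) (ω : ℕ → V d) : ENat :=
  if h : ∃ j, ω j ∉ A then (Nat.find h : ENat) else ⊤

/-- First hitting time `T_A` of `A`, valued in `ℕ∞`. -/
noncomputable def hitTimeE (A : Set (V d)) (ω : ℕ → V d) : ENat :=
  if h : ∃ j, ω j ∈ A then (Nat.find h : ENat) else ⊤

/-- First positive hitting time `T⁺_A` of `A`, valued in `ℕ∞`. -/
noncomputable def hitTimePosE (A : Set (V d)) (ω : ℕ → V d) : ENat :=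
  if h : ∃ j, 1 ≤ j ∧ ω j ∈ A then (Nat.find h : ENat) else ⊤

/-- First exit time from `A` as a natural number (junk value `0` if the path never exits). -/
noncomputable def exitTime (A : Set (V d)) (ω : ℕ → V d) : ℕ := (exitTimeE A ω).toNat

/-- Index of the first hit of `A` (junk value `0` if `A` is never hit). -/
noncomputable def hitIdx (A : Set (V d)) (γ : ℕ → V d) : ℕ := (hitTimeE A γ).toNat

/-- First index `≥ t` at which the path lies in `A` (junk value `t`). -/
noncomputable def hitIdxFrom (A : Set (V d)) (t : ℕ) (γ : ℕ → V d) : ℕ :=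
  if h : ∃ j, t ≤ j ∧ γ j ∈ A then Nat.find h else t

/-- The path frozen at its first exit from `D`. -/
noncomputable def stopAt (D : Set (V d)) (ω : ℕ → V d) : ℕ → V d :=
  fun j => if (j : ENat) ≤ exitTimeE D ω then ω j else ω (exitTime D ω)

/-- Time of the last visit of the path to the point `ω t`, at or after time `t`
(junk value if there are infinitely many such visits). -/
noncomputable def lastVisit (ω : ℕ → V d) (t : ℕ) : ℕ := sSup { j | t ≤ j ∧ ω j = ω t }

/-- The times of the chronological loop erasure (last-exit decomposition). -/
noncomputable def leTime (ω : ℕ → V d) : ℕ → ℕ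
  | 0 => lastVisit ω 0
  | k + 1 => lastVisit ω (leTime ω k + 1)

/-- Chronological loop erasure of an (infinite, transient) path. -/
noncomputable def infLoopErase (ω : ℕ → V d) : ℕ → V d := fun k => ω (leTime ω k)

/-- The loop erasure `L` of the walk stopped at its first exit from `D`. -/
noncomputable def lerw (D : Set (V d)) (ω : ℕ → V d) : ℕ → V d := infLoopErase (stopAt D ω)

/-- The event `T_A > τ_D`: the walk does not visit `A` at any time up to (and
including) its first exit from `D`; if it never exits `D`, it never visits `A`. -/
def avoidBeforeExit (D A : Set (V d)) (ω : ℕ → V d) : Prop :=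
  ∀ j : ℕ, (j : ENat) ≤ exitTimeE D ω → ω j ∉ A

/-- The event `T⁺_A > τ_D` (visits of `A` at positive times only). -/
def avoidBeforeExitPos (D A : Set (V d)) (ω : ℕ → V d) : Prop :=
  ∀ j : ℕ, 1 ≤ j → (j : ENat) ≤ exitTimeE D ω → ω j ∉ A

/-- The right-hand face (in the first coordinate direction) of the cube `Q(x₀,m)`. -/
def rightFace (x₀ : V d) (m : ℕ) : Set (V d) :=
  { y | y ∈ cube x₀ m ∧ ∀ i : Fin d, (i : ℕ) = 0 → y i = x₀ i + (m : ℤ) }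


/-- Auxiliary function for chronological loop erasure of a finite path:
`leAux acc l` processes the points of `l` one by one, erasing a loop each time the
next point already occurs in the accumulated path. -/
def leAux : List (V d) → List (V d) → List (V d)
  | acc, [] => acc
  | acc, x :: xs =>
    if x ∈ acc then leAux (acc.takeWhile (· ≠ x) ++ [x]) xs
    else leAux (acc ++ [x]) xs

/-- Chronological loop erasure of a finite path. -/
def loopErase (l : List (V d)) : List (V d) := leAux [] l

/-- The walk as a finite path, stopped at its first hit of the point `x`. -/
noncomputable def stoppedAtPointList (x : V d) (ω : ℕ → V d) : List (V d) :=
  (List.range (hitIdx ({x} : Set (V d)) ω + 1)).map ω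

section Analytic

noncomputable def EE (d : ℕ) : ℕ → ((Fin d → ℕ) → ℝ) → ℝ
  | 0, F => F 0
  | j + 1, F => (1 / (d : ℝ)) * ∑ i, EE d j (fun n => F (n + Pi.single i 1))

lemma EE_mono (d : ℕ) : ∀ (j : ℕ) (F G : (Fin d → ℕ) → ℝ),
    (∀ n, (∀ i, n i ≤ j) → F n ≤ G n) → EE d j F ≤ EE d j G
  | 0, F, G, h => h 0 (by simp)
  | j + 1, F, G, h => by
    unfold EE
    gcongr with i
    apply EE_mono
    intro n hn
    apply h
    intro k
    have := hn k
    by_cases hk : k = i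
    · subst hk; simp; omega
    · simp [hk]; omega

lemma EE_add (d : ℕ) : ∀ (j : ℕ) (F G : (Fin d → ℕ) → ℝ),
    EE d j (fun n => F n + G n) = EE d j F + EE d j G
  | 0, F, G => rfl
  | j + 1, F, G => by
    simp only [EE, EE_add d j, Finset.sum_add_distrib, mul_add]

lemma EE_mul (d : ℕ) (c : ℝ) : ∀ (j : ℕ) (F : (Fin d → ℕ) → ℝ),
    EE d j (fun n => c * F n) = c * EE d j F
  | 0, F => rfl
  | j + 1, F => by
    simp only [EE, EE_mul d c j, ← Finset.mul_sum]; ring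

lemma EE_nonneg (d : ℕ) (j : ℕ) (F : (Fin d → ℕ) → ℝ) (h : ∀ n, 0 ≤ F n) : 0 ≤ EE d j F := by
  have := EE_mono d j (fun n => 0 * F n) F (by intro n _; simpa using h n)
  rwa [EE_mul, zero_mul] at this

lemma EE_one (d : ℕ) (hd : 0 < d) : ∀ j : ℕ, EE d j (fun _ => 1) = 1
  | 0 => rfl
  | j + 1 => by
    have : (d : ℝ) ≠ 0 := by positivity
    simp [EE, EE_one d hd j, this]

lemma EE_sq (d : ℕ) (hd : 0 < d) : ∀ (j : ℕ) (F : (Fin d → ℕ) → ℝ),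
    (EE d j F) ^ 2 ≤ EE d j (fun n => F n ^ 2)
  | 0, F => le_rfl
  | j + 1, F => by
    have hd' : (0 : ℝ) < d := by positivity
    unfold EE
    have h1 := sq_sum_le_card_mul_sum_sq (s := (Finset.univ : Finset (Fin d)))
      (f := fun i => EE d j (fun n => F (n + Pi.single i 1)))
    simp only [Finset.card_univ, Fintype.card_fin] at h1
    have h2 : ∑ i, EE d j (fun n => F (n + Pi.single i 1)) ^ 2
        ≤ ∑ i, EE d j (fun n => F (n + Pi.single i 1) ^ 2) :=
      Finset.sum_le_sum fun i _ => EE_sq d hd j _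
    rw [mul_pow]
    calc (1 / (d : ℝ)) ^ 2 * (∑ i, EE d j (fun n => F (n + Pi.single i 1))) ^ 2
        ≤ (1 / (d : ℝ)) ^ 2 * (d * ∑ i, EE d j (fun n => F (n + Pi.single i 1) ^ 2)) := by
          gcongr; exact h1.trans (by gcongr)
      _ = _ := by field_simp

lemma EE_bias (d : ℕ) (hd : 0 < d) (i : Fin d) : ∀ (j : ℕ) (g : (Fin d → ℕ) → ℝ),
    EE d (j + 1) (fun n => (n i : ℝ) * g n) =
      ((j : ℝ) + 1) / d * EE d j (fun n => g (n + Pi.single i 1)) := by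
  intro j
  have hd' : (d : ℝ) ≠ 0 := by positivity
  have key : ∀ (j : ℕ) (g : (Fin d → ℕ) → ℝ),
      EE d (j + 1) (fun n => (n i : ℝ) * g n) =
      (1 / (d : ℝ)) * (∑ k, EE d j (fun n => (n i : ℝ) * g (n + Pi.single k 1))
        + EE d j (fun n => g (n + Pi.single i 1))) := by
    intro j g
    rw [EE]
    congr 1
    have : ∀ k : Fin d, EE d j (fun n => (((n + Pi.single k 1 : Fin d → ℕ) i : ℕ) : ℝ) * g (n + Pi.single k 1))
        = EE d j (fun n => (n i : ℝ) * g (n + Pi.single k 1))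
          + (if k = i then EE d j (fun n => g (n + Pi.single i 1)) else 0) := by
      intro k
      by_cases hk : k = i
      · subst hk
        rw [if_pos rfl, ← EE_add]
        congr 1; ext n; simp; ring
      · rw [if_neg hk, add_zero]
        congr 1; ext n
        have : i ≠ k := fun h => hk h.symm
        simp [this]
    rw [Finset.sum_congr rfl (fun k _ => this k), Finset.sum_add_distrib]
    simp
  induction j with
  | zero =>
    intro g
    rw [key]
    simp [EE]
  | succ j ih =>
    intro g
    rw [key]
    simp only [ih (fun n => g (n + Pi.single _ 1))]
    rw [← Finset.mul_sum]
    have : EE d (j + 1) (fun n => g (n + Pi.single i 1)) = 1 / (d : ℝ) *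
       ∑ k, EE d j (fun n => g (n + Pi.single i 1 + Pi.single k 1)) := by
      rw [EE]; congr 2; ext k; congr 1; ext n; congr 1; abel
    rw [this]
    push_cast
    field_simp

lemma EE_prod (d : ℕ) (hd : 0 < d) (S : Finset (Fin d)) : ∀ j : ℕ,
    EE d j (fun n => ∏ i ∈ S, (1 / ((n i : ℝ) + 1))) ≤ ((d : ℝ) / (j + 1)) ^ S.card := by
  induction S using Finset.induction_on with
  | empty => intro j; simp [EE_one d hd j]
  | insert i S hi ih =>
    intro j
    have hd' : (0 : ℝ) < d := by positivity
    have h1 := EE_bias d hd i j (fun n => (∏ k ∈ S, (1 / ((n k : ℝ) + 1))) / (n i : ℝ))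
    have h2 : (fun n : Fin d → ℕ => (∏ k ∈ S, (1 / (((n + Pi.single i 1 : Fin d → ℕ) k : ℝ) + 1))) /
        ((n + Pi.single i 1 : Fin d → ℕ) i : ℝ)) =
        fun n => ∏ k ∈ insert i S, (1 / ((n k : ℝ) + 1)) := by
      ext n
      rw [Finset.prod_insert hi]
      have : ∏ k ∈ S, (1 / (((n + Pi.single i 1 : Fin d → ℕ) k : ℝ) + 1)) =
          ∏ k ∈ S, (1 / ((n k : ℝ) + 1)) := by
        apply Finset.prod_congr rfl
        intro k hk
        have : k ≠ i := by rintro rfl; exact hi hk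
        simp [this]
      rw [this]; simp; ring
    rw [h2] at h1
    have h3 : EE d (j + 1) (fun n => (n i : ℝ) * ((∏ k ∈ S, (1 / ((n k : ℝ) + 1))) / (n i : ℝ)))
        ≤ EE d (j + 1) (fun n => ∏ k ∈ S, (1 / ((n k : ℝ) + 1))) := by
      apply EE_mono
      intro n _
      have hp : 0 ≤ ∏ k ∈ S, (1 / ((n k : ℝ) + 1)) := Finset.prod_nonneg fun k _ => by positivity
      by_cases h0 : (n i : ℝ) = 0
      · simp only [h0, zero_mul]; exact hp
      · rw [mul_div_cancel₀ _ h0]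
    have h4 := ih (j + 1)
    rw [h1] at h3
    have h5 : ((d : ℝ) / ((j + 1 : ℕ) + 1)) ^ S.card ≤ ((d : ℝ) / (j + 1)) ^ S.card := by
      push_cast
      gcongr
      linarith
    rw [Finset.card_insert_of_notMem hi, pow_succ]
    have h6 := h3.trans (h4.trans h5)
    have hj : (0 : ℝ) < (j : ℝ) + 1 := by positivity
    calc _ = (d / ((j : ℝ) + 1)) * (((j : ℝ) + 1) / d *
          EE d j (fun n => ∏ k ∈ insert i S, (1 / ((n k : ℝ) + 1)))) := by field_simp
      _ ≤ (d / ((j : ℝ) + 1)) * ((d : ℝ) / (j + 1)) ^ S.card := by gcongr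
      _ = _ := by ring

noncomputable def vv : ℕ → ℝ
  | 0 => 1 / 2
  | k + 1 => vv k - vv k ^ 2

lemma vv_bds : ∀ k : ℕ, 1 / (2 * (k : ℝ) + 2) ≤ vv k ∧ vv k ≤ 1 / ((k : ℝ) + 2)
  | 0 => by norm_num [vv]
  | k + 1 => by
    obtain ⟨h1, h2⟩ := vv_bds k
    have hk : (0 : ℝ) ≤ k := by positivity
    rw [vv]
    have e2 : 1 / ((k : ℝ) + 2) ≤ 1 / 2 := by
      apply one_div_le_one_div_of_le <;> linarith
    have m : ∀ a b : ℝ, a ≤ b → b ≤ 1 / 2 → a - a ^ 2 ≤ b - b ^ 2 := by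
      intro a b h h'; nlinarith
    push_cast
    constructor
    · refine le_trans ?_ (m _ _ h1 (h2.trans e2))
      rw [div_le_iff₀ (by positivity)]
      have : (1 / (2 * (k : ℝ) + 2) - (1 / (2 * (k : ℝ) + 2)) ^ 2) * (2 * (k + 1) + 2)
        = (2 * k + 1) * (2 * k + 4) / (2 * k + 2) ^ 2 := by field_simp; ring
      rw [this, le_div_iff₀ (by positivity)]
      nlinarith
    · refine (m _ _ h2 e2).trans ?_
      rw [le_div_iff₀ (by positivity)]
      have : (1 / ((k : ℝ) + 2) - (1 / ((k : ℝ) + 2)) ^ 2) * (k + 1 + 2)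
        = (k + 1) * (k + 3) / (k + 2) ^ 2 := by field_simp; ring
      rw [this, div_le_one (by positivity)]
      nlinarith

lemma vv_pos (k : ℕ) : 0 < vv k := lt_of_lt_of_le (by positivity) (vv_bds k).1

lemma vv_le (k : ℕ) : vv k ≤ 1 / 2 := (vv_bds k).2.trans (by
  have hk : (0 : ℝ) ≤ k := by positivity
  apply one_div_le_one_div_of_le <;> linarith)

noncomputable def KK : ℝ := (Real.sqrt (1 / 2) * Real.exp (-(1 / 2) / 2))⁻¹

lemma KK_pos : 0 < KK := by unfold KK; positivity

noncomputable def hh (k : ℕ) (x : ℤ) : ℝ :=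
  KK * (Real.sqrt (vv k) * Real.exp (-(vv k) / 2)) * Real.exp (-(vv k) * (x : ℝ) ^ 2 / 2)

lemma hh_pos (k : ℕ) (x : ℤ) : 0 < hh k x := by
  have := vv_pos k
  have := KK_pos
  unfold hh; positivity

lemma hh_zero : hh 0 0 = 1 := by
  have : Real.sqrt (1 / 2) * Real.exp (-(1 / 2) / 2) ≠ 0 := by positivity
  simp only [hh, vv, KK]
  rw [inv_mul_cancel₀ this]; simp

lemma exp_aux (v : ℝ) (h0 : 0 < v) (h1 : v ≤ 1 / 2) : Real.exp (-v - v ^ 2) ≤ 1 - v := by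
  have h := Real.quadratic_le_exp_of_nonneg (x := v + v ^ 2) (by positivity)
  have h2 : 1 ≤ (1 - v) * Real.exp (v + v ^ 2) := by
    have : (1 - v) * (1 + (v + v ^ 2) + (v + v ^ 2) ^ 2 / 2) ≤ (1 - v) * Real.exp (v + v ^ 2) := by
      gcongr; linarith
    refine le_trans ?_ this
    nlinarith [pow_pos h0 2, pow_pos h0 3, pow_pos h0 4, pow_pos h0 5,
      mul_nonneg (pow_pos h0 2).le (sub_nonneg.2 h1), mul_nonneg (pow_pos h0 3).le (sub_nonneg.2 h1),
      mul_nonneg (pow_pos h0 4).le (sub_nonneg.2 h1)]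
  have e : -v - v ^ 2 = -(v + v ^ 2) := by ring
  rw [e, Real.exp_neg]
  rw [inv_le_iff_one_le_mul₀ (Real.exp_pos _)]
  exact h2

lemma hh_step (k : ℕ) (x : ℤ) : (hh k (x - 1) + hh k (x + 1)) / 2 ≤ hh (k + 1) x := by
  have h0 := vv_pos k
  have h1 := vv_le k
  set v := vv k with hv
  have hK := KK_pos
  unfold hh
  rw [← hv, show vv (k + 1) = v - v ^ 2 from rfl]
  push_cast
  have e1 : Real.exp (-v * ((x : ℝ) - 1) ^ 2 / 2) + Real.exp (-v * ((x : ℝ) + 1) ^ 2 / 2)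
      = 2 * (Real.exp (-v * (x : ℝ) ^ 2 / 2 - v / 2) * Real.cosh (v * x)) := by
    rw [Real.cosh_eq]
    have : Real.exp (-v * (x : ℝ) ^ 2 / 2 - v / 2) * ((Real.exp (v * x) + Real.exp (-(v * x))) / 2)
      = (Real.exp (-v * (x : ℝ) ^ 2 / 2 - v / 2) * Real.exp (v * x) +
        Real.exp (-v * (x : ℝ) ^ 2 / 2 - v / 2) * Real.exp (-(v * x))) / 2 := by ring
    rw [this, ← Real.exp_add, ← Real.exp_add]
    rw [mul_div_cancel₀ _ (by norm_num)]
    congr 2 <;> ring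
  have e2 : Real.cosh (v * x) ≤ Real.exp ((v * x) ^ 2 / 2) := Real.cosh_le_exp_half_sq _
  have e3 : Real.sqrt v * Real.exp (-v) ≤ Real.sqrt (v - v ^ 2) * Real.exp (-(v - v ^ 2) / 2) := by
    have : v - v ^ 2 = v * (1 - v) := by ring
    rw [show Real.sqrt (v - v ^ 2) = Real.sqrt v * Real.sqrt (1 - v) by
      rw [this, Real.sqrt_mul h0.le], mul_assoc]
    gcongr
    have h3 : Real.exp ((-v - v ^ 2) / 2) ≤ Real.sqrt (1 - v) := by
      rw [Real.exp_half]
      exact Real.sqrt_le_sqrt (exp_aux v h0 h1)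
    calc Real.exp (-v) = Real.exp ((-v - v ^ 2) / 2) * Real.exp (-(v - v ^ 2) / 2) := by
          rw [← Real.exp_add]; congr 1; ring
      _ ≤ _ := by gcongr
  calc _ = KK * (Real.sqrt v * Real.exp (-v / 2)) *
        ((Real.exp (-v * ((x : ℝ) - 1) ^ 2 / 2) + Real.exp (-v * ((x : ℝ) + 1) ^ 2 / 2)) / 2) := by ring
    _ = KK * (Real.sqrt v * Real.exp (-v / 2)) *
        (Real.exp (-v * (x : ℝ) ^ 2 / 2 - v / 2) * Real.cosh (v * x)) := by rw [e1]; ring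
    _ ≤ KK * (Real.sqrt v * Real.exp (-v / 2)) *
        (Real.exp (-v * (x : ℝ) ^ 2 / 2 - v / 2) * Real.exp ((v * x) ^ 2 / 2)) := by gcongr
    _ = KK * (Real.sqrt v * Real.exp (-v)) * Real.exp (-(v - v ^ 2) * (x : ℝ) ^ 2 / 2) := by
        have : Real.exp (-v / 2) * (Real.exp (-v * (x : ℝ) ^ 2 / 2 - v / 2) * Real.exp ((v * x) ^ 2 / 2))
          = Real.exp (-v) * Real.exp (-(v - v ^ 2) * (x : ℝ) ^ 2 / 2) := by
          rw [← Real.exp_add, ← Real.exp_add, ← Real.exp_add]; congr 1; ring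
        calc _ = KK * Real.sqrt v * (Real.exp (-v / 2) *
              (Real.exp (-v * (x : ℝ) ^ 2 / 2 - v / 2) * Real.exp ((v * x) ^ 2 / 2))) := by ring
          _ = _ := by rw [this]; ring
    _ ≤ _ := by gcongr

lemma hh_bound (k : ℕ) (x : ℤ) :
    hh k x ≤ KK * (1 / Real.sqrt ((k : ℝ) + 1)) * Real.exp (-((x : ℝ) ^ 2 / (4 * ((k : ℝ) + 1)))) := by
  have h0 := vv_pos k
  obtain ⟨h1, h2⟩ := vv_bds k
  have hK := KK_pos
  unfold hh
  have a1 : Real.sqrt (vv k) * Real.exp (-(vv k) / 2) ≤ 1 / Real.sqrt ((k : ℝ) + 1) := by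
    have : Real.exp (-(vv k) / 2) ≤ 1 := Real.exp_le_one_iff.2 (by linarith)
    calc _ ≤ Real.sqrt (vv k) * 1 := by gcongr
      _ = Real.sqrt (vv k) := mul_one _
      _ ≤ Real.sqrt (1 / ((k : ℝ) + 1)) := Real.sqrt_le_sqrt (h2.trans (by gcongr; norm_num))
      _ = _ := by simp
  have a2 : -(vv k) * (x : ℝ) ^ 2 / 2 ≤ -((x : ℝ) ^ 2 / (4 * ((k : ℝ) + 1))) := by
    have : (x : ℝ) ^ 2 / (4 * ((k : ℝ) + 1)) = (1 / (2 * (k : ℝ) + 2)) * (x : ℝ) ^ 2 / 2 := by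
      field_simp; ring
    rw [this]
    have : (1 / (2 * (k : ℝ) + 2)) * (x : ℝ) ^ 2 ≤ vv k * (x : ℝ) ^ 2 := by gcongr
    linarith
  gcongr

noncomputable def HH (d j : ℕ) (x : Fin d → ℤ) : ℝ := EE d j (fun n => ∏ i, hh (n i) (x i))

lemma HH_nonneg (d j : ℕ) (x : Fin d → ℤ) : 0 ≤ HH d j x :=
  EE_nonneg _ _ _ fun n => Finset.prod_nonneg fun i _ => (hh_pos _ _).le

lemma HH_zero (d : ℕ) : HH d 0 0 = 1 := by
  simp [HH, EE, hh_zero]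

lemma HH_step (d : ℕ) (j : ℕ) (x : Fin d → ℤ) :
    (1 / (2 * (d : ℝ))) * ∑ i, (HH d j (x - Pi.single i 1) + HH d j (x + Pi.single i 1))
      ≤ HH d (j + 1) x := by
  have : ∀ i : Fin d, (HH d j (x - Pi.single i 1) + HH d j (x + Pi.single i 1)) ≤
      2 * EE d j (fun n => ∏ k, hh ((n + Pi.single i 1 : Fin d → ℕ) k) (x k)) := by
    intro i
    unfold HH
    rw [← EE_add, ← EE_mul]
    apply EE_mono
    intro n _
    rw [← Finset.mul_prod_erase _ _ (Finset.mem_univ i), ← Finset.mul_prod_erase _ _ (Finset.mem_univ i),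
      ← Finset.mul_prod_erase _ _ (Finset.mem_univ i)]
    have p1 : ∏ k ∈ Finset.univ.erase i, hh (n k) ((x - Pi.single i 1 : Fin d → ℤ) k) =
        ∏ k ∈ Finset.univ.erase i, hh (n k) (x k) := by
      refine Finset.prod_congr rfl fun k hk => ?_
      simp [Finset.ne_of_mem_erase hk]
    have p2 : ∏ k ∈ Finset.univ.erase i, hh (n k) ((x + Pi.single i 1 : Fin d → ℤ) k) =
        ∏ k ∈ Finset.univ.erase i, hh (n k) (x k) := by
      refine Finset.prod_congr rfl fun k hk => ?_
      simp [Finset.ne_of_mem_erase hk]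
    have p3 : ∏ k ∈ Finset.univ.erase i, hh ((n + Pi.single i 1 : Fin d → ℕ) k) (x k) =
        ∏ k ∈ Finset.univ.erase i, hh (n k) (x k) := by
      refine Finset.prod_congr rfl fun k hk => ?_
      simp [Finset.ne_of_mem_erase hk]
    rw [p1, p2, p3]
    simp only [Pi.add_apply, Pi.sub_apply, Pi.single_eq_same]
    have hs := hh_step (n i) (x i)
    have hp : 0 ≤ ∏ k ∈ Finset.univ.erase i, hh (n k) (x k) :=
      Finset.prod_nonneg fun k _ => (hh_pos _ _).le
    rw [← add_mul, ← mul_assoc]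
    gcongr
    linarith
  calc _ ≤ (1 / (2 * (d : ℝ))) * ∑ i, 2 * EE d j (fun n => ∏ k, hh ((n + Pi.single i 1 : Fin d → ℕ) k) (x k)) := by
        gcongr with i; exact this i
    _ = _ := by
      rw [← Finset.mul_sum, HH, EE]; 
      rw [← mul_assoc]; congr 1; rw [one_div, mul_inv, one_div]; ring

lemma HH_bound (d : ℕ) (hd : 0 < d) (j : ℕ) (x : Fin d → ℤ) :
    HH d j x ≤ (KK * Real.sqrt d) ^ d * ((1 / Real.sqrt ((j : ℝ) + 1)) ^ d *
      Real.exp (-((∑ i, (x i : ℝ) ^ 2) / (4 * ((j : ℝ) + 1))))) := by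
  have hK := KK_pos
  have h1 : HH d j x ≤ EE d j (fun n => (KK ^ d *
      Real.exp (-((∑ i, (x i : ℝ) ^ 2) / (4 * ((j : ℝ) + 1))))) * ∏ i, (1 / Real.sqrt ((n i : ℝ) + 1))) := by
    apply EE_mono
    intro n hn
    calc ∏ i, hh (n i) (x i) ≤ ∏ i, (KK * (1 / Real.sqrt ((n i : ℝ) + 1)) *
          Real.exp (-((x i : ℝ) ^ 2 / (4 * ((j : ℝ) + 1))))) := by
          apply Finset.prod_le_prod
          · intro i _; exact (hh_pos _ _).le
          · intro i _
            refine (hh_bound _ _).trans ?_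
            have : (n i : ℝ) ≤ j := by exact_mod_cast hn i
            gcongr
      _ = _ := by
        rw [Finset.prod_mul_distrib, Finset.prod_mul_distrib, ← Real.exp_sum, Finset.prod_const,
          Finset.sum_neg_distrib, ← Finset.sum_div]
        simp only [Finset.card_univ, Fintype.card_fin]
        ring
  rw [EE_mul] at h1
  have h2 : EE d j (fun n => ∏ i, (1 / Real.sqrt ((n i : ℝ) + 1))) ≤
      (Real.sqrt d) ^ d * (1 / Real.sqrt ((j : ℝ) + 1)) ^ d := by
    apply le_of_sq_le_sq _ (by positivity)
    refine (EE_sq d hd j _).trans ?_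
    have h3 := EE_prod d hd Finset.univ j
    have e : (fun n : Fin d → ℕ => (∏ i, (1 / Real.sqrt ((n i : ℝ) + 1))) ^ 2) =
        fun n => ∏ i, (1 / ((n i : ℝ) + 1)) := by
      ext n
      rw [← Finset.prod_pow]
      refine Finset.prod_congr rfl fun i _ => ?_
      rw [div_pow, Real.sq_sqrt (by positivity), one_pow]
    rw [e]
    refine h3.trans (le_of_eq ?_)
    rw [Finset.card_univ, Fintype.card_fin, ← mul_pow, ← pow_mul, mul_comm d 2, pow_mul]
    congr 1
    rw [mul_pow, div_pow, Real.sq_sqrt (by positivity), Real.sq_sqrt (by positivity)]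
    ring
  refine h1.trans ?_
  calc _ ≤ _ := mul_le_mul_of_nonneg_left h2 (by positivity)
    _ = _ := by rw [mul_pow]; ring

end Analytic
section Series

lemma sum_telescope (M : ℝ) (hM : 0 ≤ M) : ∀ N : ℕ,
    ∑ j ∈ Finset.range N, 1 / ((j : ℝ) + 1 + M) ^ 2 ≤ 2 * (1 / (1 + M) - 1 / ((N : ℝ) + 1 + M))
  | 0 => by simp
  | N + 1 => by
    rw [Finset.sum_range_succ]
    have h := sum_telescope M hM N
    have hN : (0 : ℝ) ≤ N := by positivity
    have h2 : 1 / ((N : ℝ) + 1 + M) ^ 2 ≤ 2 * (1 / ((N : ℝ) + 1 + M) - 1 / (((N + 1 : ℕ) : ℝ) + 1 + M)) := by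
      push_cast
      have : 2 * (1 / ((N : ℝ) + 1 + M) - 1 / ((N : ℝ) + 1 + 1 + M)) =
        2 / (((N : ℝ) + 1 + M) * ((N : ℝ) + 1 + 1 + M)) := by field_simp; ring
      rw [this, div_le_div_iff₀ (by positivity) (by positivity)]
      nlinarith [mul_nonneg hN hM, mul_nonneg hN hN, mul_nonneg hM hM]
    linarith

lemma term_bound (d : ℕ) (hd : 5 ≤ d) (t M : ℝ) (ht : 1 ≤ t) (hM : 0 ≤ M) :
    (1 / Real.sqrt t) ^ d * Real.exp (-(M / (8 * t))) ≤
      (8 * (d : ℝ)) ^ d * ((1 / Real.sqrt (1 + M)) ^ (d - 4) * (1 / (t + M) ^ 2)) := by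
  have hd0 : (0 : ℝ) < d := by
    have : 0 < d := by omega
    exact_mod_cast this
  have hd1 : (1 : ℝ) ≤ d := by
    have : 1 ≤ d := by omega
    exact_mod_cast this
  have ht0 : 0 < t := by linarith
  have hu : 0 ≤ M / t := by positivity
  have a1 : Real.sqrt (1 + M / t) ≤ 8 * d * Real.exp (M / t / (8 * d)) := by
    have b1 : Real.sqrt (1 + M / t) ≤ 1 + M / t := by
      rw [Real.sqrt_le_left (by positivity)]
      nlinarith
    have b2 := Real.add_one_le_exp (M / t / (8 * d))
    have b3 : 1 + M / t ≤ 8 * d * (M / t / (8 * d) + 1) := by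
      rw [mul_add, mul_div_cancel₀ _ (by positivity)]; linarith
    exact b1.trans (b3.trans (by gcongr))
  have a2 : Real.sqrt (1 + M / t) ^ d ≤ (8 * (d : ℝ)) ^ d * Real.exp (M / (8 * t)) := by
    calc _ ≤ (8 * d * Real.exp (M / t / (8 * d))) ^ d := by gcongr
      _ = _ := by
        rw [mul_pow, ← Real.exp_nat_mul]
        congr 2; field_simp
  have a3 : (1 / Real.sqrt t) = Real.sqrt (1 + M / t) * (1 / Real.sqrt (t + M)) := by
    have : 1 + M / t = (t + M) / t := by field_simp
    rw [this, Real.sqrt_div (by positivity)]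
    have : Real.sqrt (t + M) ≠ 0 := by positivity
    field_simp
  have a4 : (1 / Real.sqrt (t + M)) ^ d ≤ (1 / Real.sqrt (1 + M)) ^ (d - 4) * (1 / (t + M) ^ 2) := by
    have e : (1 / Real.sqrt (t + M)) ^ d = (1 / Real.sqrt (t + M)) ^ (d - 4) * (1 / Real.sqrt (t + M)) ^ 4 := by
      rw [← pow_add]; congr 1; omega
    have e2 : (1 / Real.sqrt (t + M)) ^ 4 = 1 / (t + M) ^ 2 := by
      rw [div_pow, one_pow, show 4 = 2 * 2 by norm_num, pow_mul, Real.sq_sqrt (by positivity)]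
    rw [e, e2]
    gcongr
  calc _ = (Real.sqrt (1 + M / t) ^ d * Real.exp (-(M / (8 * t)))) * (1 / Real.sqrt (t + M)) ^ d := by
        rw [a3, mul_pow]; ring
    _ ≤ ((8 * (d : ℝ)) ^ d * Real.exp (M / (8 * t)) * Real.exp (-(M / (8 * t)))) * (1 / Real.sqrt (t + M)) ^ d := by
        gcongr
    _ = (8 * (d : ℝ)) ^ d * (1 / Real.sqrt (t + M)) ^ d := by
        have : Real.exp (M / (8 * t)) * Real.exp (-(M / (8 * t))) = 1 := by
          rw [← Real.exp_add]; simp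
        rw [mul_assoc ((8 * (d : ℝ)) ^ d), this, mul_one]
    _ ≤ _ := by gcongr

lemma series_bound (d : ℕ) (hd : 5 ≤ d) (r : ℝ) (hr : 0 ≤ r) :
    ∑' j : ℕ, ENNReal.ofReal ((1 / Real.sqrt ((j : ℝ) + 1)) ^ d * Real.exp (-(r ^ 2 / (8 * ((j : ℝ) + 1)))))
      ≤ ENNReal.ofReal ((8 * (d : ℝ)) ^ d * 2 * 2 ^ (d - 2) * (1 + r) ^ ((2 : ℤ) - (d : ℤ))) := by
  apply ENNReal.tsum_le_of_sum_range_le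
  intro N
  rw [← ENNReal.ofReal_sum_of_nonneg (fun j _ => by positivity)]
  apply ENNReal.ofReal_le_ofReal
  have hM : 0 ≤ r ^ 2 := by positivity
  calc _ ≤ ∑ j ∈ Finset.range N, (8 * (d : ℝ)) ^ d * ((1 / Real.sqrt (1 + r ^ 2)) ^ (d - 4) *
        (1 / ((j : ℝ) + 1 + r ^ 2) ^ 2)) := by
        refine Finset.sum_le_sum fun j _ => ?_
        have hj : (0 : ℝ) ≤ j := by positivity
        exact term_bound d hd _ _ (by linarith) hM
    _ = (8 * (d : ℝ)) ^ d * ((1 / Real.sqrt (1 + r ^ 2)) ^ (d - 4) *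
        ∑ j ∈ Finset.range N, (1 / ((j : ℝ) + 1 + r ^ 2) ^ 2)) := by
        rw [← Finset.mul_sum, ← Finset.mul_sum]
    _ ≤ (8 * (d : ℝ)) ^ d * ((1 / Real.sqrt (1 + r ^ 2)) ^ (d - 4) * (2 * (1 / Real.sqrt (1 + r ^ 2)) ^ 2)) := by
        gcongr
        refine (sum_telescope _ hM N).trans ?_
        rw [div_pow, Real.sq_sqrt (by positivity), one_pow]
        have : 0 ≤ 1 / ((N : ℝ) + 1 + r ^ 2) := by positivity
        linarith
    _ = (8 * (d : ℝ)) ^ d * 2 * (1 / Real.sqrt (1 + r ^ 2)) ^ (d - 2) := by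
        rw [show d - 2 = (d - 4) + 2 by omega, pow_add]; ring
    _ ≤ (8 * (d : ℝ)) ^ d * 2 * (2 / (1 + r)) ^ (d - 2) := by
        have : 1 + r ≤ 2 * Real.sqrt (1 + r ^ 2) := by
          have h1 : 1 ≤ Real.sqrt (1 + r ^ 2) := Real.one_le_sqrt.2 (by linarith)
          have h2 : r ≤ Real.sqrt (1 + r ^ 2) := Real.le_sqrt_of_sq_le (by linarith)
          linarith
        refine mul_le_mul_of_nonneg_left (pow_le_pow_left₀ (by positivity) ?_ _) (by positivity)
        rw [div_le_div_iff₀ (by positivity) (by positivity)]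
        linarith
    _ = _ := by
        rw [div_pow, show (2 : ℤ) - (d : ℤ) = -((d - 2 : ℕ) : ℤ) by omega, zpow_neg, zpow_natCast]
        ring

lemma kappa_exists (d : ℕ) (hd : 5 ≤ d) : ∃ κ : ℝ, 0 ≤ κ ∧
    ∑' j : ℕ, ENNReal.ofReal ((j : ℝ) * HH d j 0) ≤ ENNReal.ofReal κ := by
  have hs : Summable (fun j : ℕ => (KK * Real.sqrt d) ^ d * (1 / ((j + 1 : ℕ) : ℝ) ^ ((3 : ℝ) / 2))) := by
    apply Summable.mul_left
    exact (summable_nat_add_iff 1).2 (Real.summable_one_div_nat_rpow.2 (by norm_num : (1 : ℝ) < 3 / 2))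
  have hK := KK_pos
  refine ⟨∑' j : ℕ, (KK * Real.sqrt d) ^ d * (1 / ((j + 1 : ℕ) : ℝ) ^ ((3 : ℝ) / 2)),
    tsum_nonneg fun j => by positivity, ?_⟩
  · rw [ENNReal.ofReal_tsum_of_nonneg _ hs]
    · apply ENNReal.tsum_le_tsum
      intro j
      apply ENNReal.ofReal_le_ofReal
      have h := HH_bound d (by omega) j 0
      simp only [Pi.zero_apply, Int.cast_zero, ne_eq, OfNat.ofNat_ne_zero, not_false_eq_true, zero_pow,
        Finset.sum_const_zero, zero_div, neg_zero, Real.exp_zero, mul_one] at h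
      have ht : (0 : ℝ) < (j : ℝ) + 1 := by positivity
      have h1 : 1 ≤ Real.sqrt ((j : ℝ) + 1) := Real.one_le_sqrt.2 (by linarith [(Nat.cast_nonneg j : (0 : ℝ) ≤ j)])
      have h2 : (1 / Real.sqrt ((j : ℝ) + 1)) ^ d ≤ (1 / Real.sqrt ((j : ℝ) + 1)) ^ 5 :=
        pow_le_pow_of_le_one (by positivity) (by rw [div_le_one (by positivity)]; exact h1) hd
      have h3 : ((j : ℝ) + 1) * (1 / Real.sqrt ((j : ℝ) + 1)) ^ 5 = 1 / ((j + 1 : ℕ) : ℝ) ^ ((3 : ℝ) / 2) := by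
        have : ((j + 1 : ℕ) : ℝ) ^ ((3 : ℝ) / 2) = Real.sqrt ((j : ℝ) + 1) ^ 3 := by
          rw [Real.sqrt_eq_rpow, ← Real.rpow_natCast, ← Real.rpow_mul ht.le]
          push_cast; norm_num
        rw [this]
        have h5 : (j : ℝ) + 1 = Real.sqrt ((j : ℝ) + 1) ^ 2 := (Real.sq_sqrt ht.le).symm
        have h6 : Real.sqrt ((j : ℝ) + 1) ≠ 0 := by positivity
        generalize Real.sqrt ((j : ℝ) + 1) = w at *
        rw [h5]; field_simp
      calc (j : ℝ) * HH d j 0 ≤ ((j : ℝ) + 1) * ((KK * Real.sqrt d) ^ d * (1 / Real.sqrt ((j : ℝ) + 1)) ^ 5) := by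
            apply mul_le_mul (by linarith) (h.trans (by gcongr)) (HH_nonneg _ _ _) (by positivity)
        _ = _ := by rw [← h3]; ring
    · intro j; positivity

lemma green_bound (d : ℕ) (hd : 5 ≤ d) (x : Fin d → ℤ) (r : ℝ) (hr : 0 ≤ r)
    (hx : ∑ i, (x i : ℝ) ^ 2 = r ^ 2) (θ : ℝ) (hθ : 0 < θ) (n : ℝ) (hn : 0 < n) :
    ∑' j : ℕ, ENNReal.ofReal (Real.exp (-(θ ^ 2 * r ^ 2 / n ^ 2) * ((j : ℝ) + 1)) * HH d j x) ≤
    ENNReal.ofReal ((KK * Real.sqrt d) ^ d * ((8 * (d : ℝ)) ^ d * 2 * 2 ^ (d - 2)) *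
      (1 + r) ^ ((2 : ℤ) - (d : ℤ)) * Real.exp (-(θ * r ^ 2 / (2 * n)))) := by
  have hK := KK_pos
  have key : ∀ j : ℕ, Real.exp (-(θ ^ 2 * r ^ 2 / n ^ 2) * ((j : ℝ) + 1)) * HH d j x ≤
      ((KK * Real.sqrt d) ^ d * Real.exp (-(θ * r ^ 2 / (2 * n)))) *
       ((1 / Real.sqrt ((j : ℝ) + 1)) ^ d * Real.exp (-(r ^ 2 / (8 * ((j : ℝ) + 1))))) := by
    intro j
    have h := HH_bound d (by omega) j x
    rw [hx] at h
    have ht : (0 : ℝ) < (j : ℝ) + 1 := by positivity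
    set t := (j : ℝ) + 1
    have e : Real.exp (-(θ ^ 2 * r ^ 2 / n ^ 2) * t) * Real.exp (-(r ^ 2 / (4 * t))) ≤
        Real.exp (-(θ * r ^ 2 / (2 * n))) * Real.exp (-(r ^ 2 / (8 * t))) := by
      rw [← Real.exp_add, ← Real.exp_add]
      apply Real.exp_le_exp.2
      have : 0 ≤ (θ ^ 2 * r ^ 2 / n ^ 2) * t + r ^ 2 / (8 * t) - θ * r ^ 2 / (2 * n) := by
        have : (θ ^ 2 * r ^ 2 / n ^ 2) * t + r ^ 2 / (8 * t) - θ * r ^ 2 / (2 * n) =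
          r ^ 2 * (8 * (θ * t) ^ 2 + n ^ 2 - 4 * (θ * t) * n) / (8 * t * n ^ 2) := by
          field_simp; ring
        rw [this]
        apply div_nonneg _ (by positivity)
        apply mul_nonneg (by positivity)
        nlinarith [sq_nonneg (2 * (θ * t) - n), sq_nonneg (θ * t)]
      have h8 : r ^ 2 / (4 * t) = 2 * (r ^ 2 / (8 * t)) := by field_simp; ring
      rw [h8]; linarith
    calc _ ≤ Real.exp (-(θ ^ 2 * r ^ 2 / n ^ 2) * t) * ((KK * Real.sqrt d) ^ d * ((1 / Real.sqrt t) ^ d *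
      Real.exp (-(r ^ 2 / (4 * t))))) := by gcongr
      _ = (KK * Real.sqrt d) ^ d * (1 / Real.sqrt t) ^ d * (Real.exp (-(θ ^ 2 * r ^ 2 / n ^ 2) * t) *
          Real.exp (-(r ^ 2 / (4 * t)))) := by ring
      _ ≤ (KK * Real.sqrt d) ^ d * (1 / Real.sqrt t) ^ d * (Real.exp (-(θ * r ^ 2 / (2 * n))) *
          Real.exp (-(r ^ 2 / (8 * t)))) := by gcongr
      _ = _ := by ring
  calc _ ≤ ∑' j : ℕ, ENNReal.ofReal (((KK * Real.sqrt d) ^ d * Real.exp (-(θ * r ^ 2 / (2 * n)))) *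
       ((1 / Real.sqrt ((j : ℝ) + 1)) ^ d * Real.exp (-(r ^ 2 / (8 * ((j : ℝ) + 1)))))) :=
        ENNReal.tsum_le_tsum fun j => ENNReal.ofReal_le_ofReal (key j)
    _ = ENNReal.ofReal ((KK * Real.sqrt d) ^ d * Real.exp (-(θ * r ^ 2 / (2 * n)))) *
       ∑' j : ℕ, ENNReal.ofReal ((1 / Real.sqrt ((j : ℝ) + 1)) ^ d * Real.exp (-(r ^ 2 / (8 * ((j : ℝ) + 1))))) := by
        rw [← ENNReal.tsum_mul_left]
        congr 1; ext j
        rw [ENNReal.ofReal_mul (by positivity)]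
    _ ≤ _ := by
        refine (mul_le_mul_right (series_bound d hd r hr) _).trans (le_of_eq ?_)
        rw [← ENNReal.ofReal_mul (by positivity)]
        congr 1; ring

end Series
section Combi

lemma leAux_append (acc l1 l2 : List (V d)) : leAux acc (l1 ++ l2) = leAux (leAux acc l1) l2 := by
  induction l1 generalizing acc with
  | nil => rfl
  | cons a t ih =>
    simp only [List.cons_append, leAux]
    split_ifs <;> exact ih _

lemma leAux_head (y : V d) (l acc : List (V d)) : ∃ t, leAux (y :: acc) l = y :: t := by
  induction l generalizing acc with
  | nil => exact ⟨acc, rfl⟩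
  | cons a t ih =>
    simp only [leAux]
    split_ifs with h
    · by_cases hy : y = a
      · subst hy
        simpa using ih []
      · simpa [hy] using ih _
    · exact ih _

lemma leAux_cons_notMem (y : V d) (l acc : List (V d)) (h : y ∉ l) :
    leAux (y :: acc) l = y :: leAux acc l := by
  induction l generalizing acc with
  | nil => rfl
  | cons a t ih =>
    have hy : y ≠ a := by rintro rfl; simp at h
    have ht : y ∉ t := fun h' => h (List.mem_cons_of_mem _ h')
    simp only [leAux, List.mem_cons, hy.symm, false_or]
    split_ifs with h1
    · simpa [hy] using ih _ ht
    · exact ih _ ht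

lemma loopErase_ne_nil (l : List (V d)) (h : l ≠ []) : 0 < (loopErase l).length := by
  cases l with
  | nil => exact absurd rfl h
  | cons a t =>
    obtain ⟨s, hs⟩ := leAux_head a t []
    have : loopErase (a :: t) = leAux [a] t := by simp [loopErase, leAux]
    rw [this, hs]; simp

structure Walk (A : Set (V d)) (y x : V d) (l : List (V d)) : Prop where
  chain : l.IsChain adj
  head : l.head? = some y
  mem : ∀ v ∈ l, v ∈ A
  last : ∃ l', l = l' ++ [x] ∧ x ∉ l'

structure Loop (B : Set (V d)) (y : V d) (l : List (V d)) : Prop where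
  chain : l.IsChain adj
  head : l.head? = some y
  last : l.getLast? = some y
  mem : ∀ v ∈ l, v ∈ B

lemma loopErase_loop_append {B : Set (V d)} {y : V d} {L R : List (V d)} (h : Loop B y L) (hR : y ∉ R) :
    loopErase (L ++ R) = y :: loopErase R := by
  have hL : leAux [] L = [y] := by
    have h1 := h.head
    have h2 := h.last
    cases L with
    | nil => simp at h1
    | cons a t =>
      simp at h1; subst h1
      rcases List.eq_nil_or_concat t with rfl | ⟨s, b, rfl⟩
      · simp [leAux]
      · rw [List.concat_eq_append, ← List.cons_append, List.getLast?_concat] at h2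
        obtain rfl : b = a := by simpa using h2
        obtain ⟨u, hu⟩ := leAux_head b s []
        have : leAux [] (b :: (s ++ [b])) = leAux (leAux [b] s) [b] := by
          rw [← leAux_append]; simp [leAux]
        simp only [List.concat_eq_append]
        rw [this, hu]
        simp [leAux]
  rw [loopErase, leAux_append, hL, leAux_cons_notMem _ _ _ hR]; rfl

lemma exists_last_split (y : V d) (l : List (V d)) (h : y ∈ l) :
    ∃ s t, l = s ++ y :: t ∧ y ∉ t := by
  induction l with
  | nil => simp at h
  | cons a t ih =>
    by_cases ht : y ∈ t
    · obtain ⟨s, u, rfl, hu⟩ := ih ht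
      exact ⟨a :: s, u, rfl, hu⟩
    · have : y = a := by simpa [ht] using h
      subst this
      exact ⟨[], t, rfl, ht⟩

lemma Walk.decomp {A : Set (V d)} {y x : V d} {l : List (V d)} (h : Walk A y x l) (hyx : y ≠ x) :
    ∃ L z R, L ++ R = l ∧ Loop (A \ {x}) y L ∧ adj y z ∧ Walk (A \ {y}) z x R := by
  have hy : y ∈ l := List.mem_of_mem_head? h.head
  obtain ⟨s, t, rfl, ht⟩ := exists_last_split y l hy
  obtain ⟨l', hl', hx⟩ := h.last
  rcases List.eq_nil_or_concat t with rfl | ⟨t', b, rfl⟩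
  · have := congrArg List.getLast? hl'
    simp at this; exact absurd this hyx
  simp only [List.concat_eq_append] at *
  have hb : b = x := by
    have := congrArg List.getLast? hl'
    rw [show s ++ y :: (t' ++ [b]) = (s ++ y :: t') ++ [b] by simp, List.getLast?_concat,
      List.getLast?_concat] at this
    simpa using this
  subst hb
  have hl2 : s ++ y :: t' = l' := by
    rw [show s ++ y :: (t' ++ [b]) = (s ++ y :: t') ++ [b] by simp] at hl'
    exact List.append_cancel_right hl'
  subst hl2
  have hchain := h.chain
  rw [show s ++ y :: (t' ++ [b]) = (s ++ [y]) ++ (t' ++ [b]) by simp, List.isChain_append] at hchain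
  obtain ⟨c1, c2, c3⟩ := hchain
  have hne : t' ++ [b] ≠ [] := by simp
  refine ⟨s ++ [y], (t' ++ [b]).head hne, t' ++ [b], by simp, ⟨c1, ?_, by simp, ?_⟩, ?_, ⟨c2, ?_, ?_, ⟨t', rfl, ?_⟩⟩⟩
  · have := h.head
    cases s with
    | nil => simp
    | cons a s => simpa using this
  · intro v hv
    refine ⟨h.mem v ?_, ?_⟩
    · simp at hv ⊢; tauto
    · rintro rfl
      apply hx; simp at hv ⊢; tauto
  · exact c3 y (by simp) _ (List.head_mem_head? hne)
  · exact List.head?_eq_some_head hne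
  · intro v hv
    refine ⟨h.mem v ?_, ?_⟩
    · simp at hv ⊢; tauto
    · rintro rfl; exact ht hv
  · intro hh; apply hx; simp [hh]

lemma Walk.comp {A : Set (V d)} {y x z : V d} {L R : List (V d)} (hyx : y ≠ x)
    (hL : Loop (A \ {x}) y L) (hz : adj y z) (hR : Walk (A \ {y}) z x R) : Walk A y x (L ++ R) := by
  refine ⟨?_, ?_, ?_, ?_⟩
  · rw [List.isChain_append]
    refine ⟨hL.chain, hR.chain, ?_⟩
    intro a ha b hb
    rw [hL.last] at ha; rw [hR.head] at hb
    simp at ha hb; subst ha; subst hb; exact hz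
  · rw [List.head?_append, hL.head]; rfl
  · intro v hv
    rcases List.mem_append.1 hv with h | h
    · exact (hL.mem v h).1
    · exact (hR.mem v h).1
  · obtain ⟨l', rfl, hx⟩ := hR.last
    refine ⟨L ++ l', by simp, ?_⟩
    intro h
    rcases List.mem_append.1 h with h | h
    · exact (hL.mem x h).2 rfl
    · exact hx h

lemma split_unique {B A : Set (V d)} {y x z z' : V d} {L R L' R' : List (V d)}
    (hL : Loop B y L) (hR : Walk (A \ {y}) z x R)
    (hL' : Loop B y L') (hR' : Walk (A \ {y}) z' x R') (h : L ++ R = L' ++ R') :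
    L = L' ∧ z = z' ∧ R = R' := by
  have aux : ∀ {z z' : V d} {L R L' R' : List (V d)}, Walk (A \ {y}) z x R → Loop B y L' → ∀ a, L' = L ++ a → R = a ++ R' → a = [] := by
    intro z z' L R L' R' hR hL' a h1 h2
    rcases List.eq_nil_or_concat a with rfl | ⟨s, b, rfl⟩
    · rfl
    · exfalso
      have := hL'.last
      rw [h1] at this
      simp at this
      subst this
      exact (hR.mem b (by rw [h2]; simp)).2 rfl
  have : L = L' ∧ R = R' := by
    rcases List.append_eq_append_iff.1 h with ⟨a, h1, h2⟩ | ⟨a, h1, h2⟩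
    · have := aux (z := z) (z' := z) hR hL' a h1 h2
      subst this; simp at h1 h2; exact ⟨h1.symm, h2⟩
    · have := aux (z := z') (z' := z) hR' hL a h1 h2
      subst this; simp at h1 h2; exact ⟨h1, h2.symm⟩
  obtain ⟨rfl, rfl⟩ := this
  refine ⟨rfl, ?_, rfl⟩
  have := hR.head.symm.trans hR'.head
  simpa using this

lemma tsum_le_surj {α β : Type*} (a : α → ℝ≥0∞) (b : β → ℝ≥0∞) (π : β → α)
    (h : ∀ l, a l ≠ 0 → ∃ t, π t = l ∧ a l ≤ b t) : ∑' l, a l ≤ ∑' t, b t := by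
  choose φ h1 h2 using h
  rw [← tsum_subtype_support a]
  have inj : Function.Injective (fun l : Function.support a => φ l l.2) := by
    intro l l' hl
    apply Subtype.ext
    rw [← h1 l l.2, ← h1 l' l'.2]; exact congrArg π hl
  calc _ ≤ ∑' l : Function.support a, b (φ l l.2) := ENNReal.tsum_le_tsum fun l => h2 l l.2
    _ ≤ _ := ENNReal.tsum_comp_le_tsum_of_injective inj b

lemma tsum_le_inj {α β : Type*} (a : α → ℝ≥0∞) (b : β → ℝ≥0∞) (π : α → β)
    (h : ∀ l, a l ≠ 0 → a l ≤ b (π l))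
    (hi : ∀ l l', a l ≠ 0 → a l' ≠ 0 → π l = π l' → l = l') : ∑' l, a l ≤ ∑' t, b t := by
  rw [← tsum_subtype_support a]
  have inj : Function.Injective (fun l : Function.support a => π l) := by
    intro l l' hl
    exact Subtype.ext (hi _ _ l.2 l'.2 hl)
  calc _ ≤ ∑' l : Function.support a, b (π l) := ENNReal.tsum_le_tsum fun l => h l l.2
    _ ≤ _ := ENNReal.tsum_comp_le_tsum_of_injective inj b

noncomputable def fS (q : ℝ≥0∞) (A : Set (V d)) (y x : V d) (M : ℕ) : ℝ≥0∞ :=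
  ∑' l : List (V d), if Walk A y x l ∧ (loopErase l).length ≤ M then q ^ l.length else 0

noncomputable def gS (p : ℝ≥0∞) (A : Set (V d)) (y x : V d) : ℝ≥0∞ :=
  ∑' l : List (V d), if Walk A y x l then p ^ l.length else 0

noncomputable def loopS (p : ℝ≥0∞) (B : Set (V d)) (y : V d) : ℝ≥0∞ :=
  ∑' l : List (V d), if Loop B y l then p ^ l.length else 0

lemma triple_sum (u : List (V d) → ℝ≥0∞) (w : V d → List (V d) → ℝ≥0∞) :
    ∑' t : List (V d) × V d × List (V d), u t.1 * w t.2.1 t.2.2 = (∑' L, u L) * ∑' z, ∑' R, w z R := by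
  rw [ENNReal.tsum_prod', ← ENNReal.tsum_mul_right]
  congr 1; ext L
  simp only
  rw [ENNReal.tsum_mul_left, ENNReal.tsum_prod']

lemma fS_step (q : ℝ≥0∞) (A : Set (V d)) (y x : V d) (M : ℕ) (hyx : y ≠ x) :
    fS q A y x (M + 1) ≤ loopS q (A \ {x}) y * ∑' z, if adj y z then fS q (A \ {y}) z x M else 0 := by
  have : (∑' z, if adj y z then fS q (A \ {y}) z x M else 0) =
     ∑' z, ∑' R, if adj y z then (if Walk (A \ {y}) z x R ∧ (loopErase R).length ≤ M then q ^ R.length else 0) else 0 := by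
    congr 1; ext z
    split_ifs
    · rfl
    · simp
  rw [this, loopS, ← triple_sum, fS]
  apply tsum_le_surj _ _ (fun t => t.1 ++ t.2.2)
  intro l hl
  have hl' : Walk A y x l ∧ (loopErase l).length ≤ M + 1 := by
    by_contra hh; exact hl (if_neg hh)
  obtain ⟨L, z, R, rfl, h1, h2, h3⟩ := hl'.1.decomp hyx
  refine ⟨(L, z, R), rfl, ?_⟩
  have h4 : (loopErase R).length ≤ M := by
    have := hl'.2
    rw [loopErase_loop_append h1 (fun hh => (h3.mem y hh).2 rfl)] at this
    simpa using this
  simp only [if_pos h1, if_pos h2, if_pos (And.intro h3 h4), if_pos hl', List.length_append, pow_add]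
  exact le_rfl

lemma gS_step (p : ℝ≥0∞) (A : Set (V d)) (y x : V d) (hyx : y ≠ x) :
    (loopS p (A \ {x}) y * ∑' z, if adj y z then gS p (A \ {y}) z x else 0) ≤ gS p A y x := by
  have : (∑' z, if adj y z then gS p (A \ {y}) z x else 0) =
     ∑' z, ∑' R, if adj y z then (if Walk (A \ {y}) z x R then p ^ R.length else 0) else 0 := by
    congr 1; ext z
    split_ifs
    · rfl
    · simp
  rw [this, loopS, ← triple_sum, gS]
  have key : ∀ t : List (V d) × V d × List (V d), (if Loop (A \ {x}) y t.1 then p ^ t.1.length else 0) *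
      (if adj y t.2.1 then (if Walk (A \ {y}) t.2.1 x t.2.2 then p ^ t.2.2.length else 0) else 0) ≠ 0 →
      Loop (A \ {x}) y t.1 ∧ adj y t.2.1 ∧ Walk (A \ {y}) t.2.1 x t.2.2 := by
    intro t ht
    by_contra hh
    apply ht
    by_cases h1 : Loop (A \ {x}) y t.1
    · by_cases h2 : adj y t.2.1
      · by_cases h3 : Walk (A \ {y}) t.2.1 x t.2.2
        · exact absurd ⟨h1, h2, h3⟩ hh
        · simp [h3]
      · simp [h2]
    · simp [h1]
  apply tsum_le_inj _ _ (fun t => t.1 ++ t.2.2)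
  · intro t ht
    obtain ⟨h1, h2, h3⟩ := key t ht
    simp only [if_pos h1, if_pos h2, if_pos h3, if_pos (Walk.comp hyx h1 h2 h3), List.length_append, pow_add]
    exact le_rfl
  · rintro ⟨L, z, R⟩ ⟨L', z', R'⟩ ht ht' heq
    obtain ⟨h1, h2, h3⟩ := key _ ht
    obtain ⟨h1', h2', h3'⟩ := key _ ht'
    obtain ⟨rfl, rfl, rfl⟩ := split_unique h1 h3 h1' h3' heq
    rfl

lemma walk_self {A : Set (V d)} {x : V d} {l : List (V d)} (h : Walk A x x l) : l = [x] := by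
  obtain ⟨l', rfl, hx⟩ := h.last
  have := h.head
  cases l' with
  | nil => rfl
  | cons a t => simp at this; subst this; simp at hx

lemma fS_le (q p Λ : ℝ≥0∞) (hΛ : 1 ≤ Λ) (hq : q ≤ Λ * p)
    (hL : ∀ (B : Set (V d)) (y : V d), loopS q B y ≤ Λ * loopS p B y) (x : V d) :
    ∀ (M : ℕ) (A : Set (V d)) (y : V d), fS q A y x M ≤ Λ ^ M * gS p A y x := by
  intro M
  induction M with
  | zero =>
    intro A y
    have : fS q A y x 0 = 0 := by
      rw [fS, ENNReal.tsum_eq_zero]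
      intro l
      rw [if_neg]
      rintro ⟨h1, h2⟩
      have hne : l ≠ [] := by rintro rfl; simpa using h1.head
      have := loopErase_ne_nil l hne
      omega
    rw [this]; exact zero_le
  | succ M ih =>
    intro A y
    by_cases hyx : y = x
    · subst hyx
      rw [fS, gS, ← ENNReal.tsum_mul_left]
      apply ENNReal.tsum_le_tsum
      intro l
      split_ifs with h1 h2
      · rw [walk_self h1.1]
        simp only [List.length_singleton, pow_one]
        refine hq.trans ?_
        gcongr
        calc Λ = Λ ^ 1 := (pow_one _).symm
          _ ≤ Λ ^ (M + 1) := pow_le_pow_right₀ hΛ (by omega)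
      · exact absurd h1.1 h2
      · exact zero_le
      · exact zero_le
    · calc _ ≤ _ := fS_step q A y x M hyx
        _ ≤ (Λ * loopS p (A \ {x}) y) * ∑' z, (Λ ^ M * if adj y z then gS p (A \ {y}) z x else 0) := by
          gcongr with z
          · exact hL _ _
          · split_ifs
            · exact ih _ _
            · simp
        _ = Λ ^ (M + 1) * (loopS p (A \ {x}) y * ∑' z, if adj y z then gS p (A \ {y}) z x else 0) := by
          rw [ENNReal.tsum_mul_left]; ring
        _ ≤ _ := by gcongr; exact gS_step p A y x hyx

end Combi
section Paths

def nb (v : V d) (e : Fin d × Bool) : V d :=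
  if e.2 then v + Pi.single e.1 1 else v - Pi.single e.1 1

lemma adj_nb (v : V d) (e : Fin d × Bool) : adj v (nb v e) := by
  obtain ⟨i, b⟩ := e
  unfold adj nb
  rw [Finset.sum_eq_single i]
  · cases b <;> simp
  · intro k _ hk
    cases b <;> simp [hk]
  · simp

lemma exists_nb {v w : V d} (h : adj v w) : ∃ e, w = nb v e := by
  unfold adj at h
  have h1 : ∃ i, v i - w i ≠ 0 := by
    by_contra hh
    push Not at hh
    simp [hh] at h
  obtain ⟨i, hi⟩ := h1
  rw [← Finset.add_sum_erase _ _ (Finset.mem_univ i)] at h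
  have h2 : 1 ≤ |v i - w i| := Int.one_le_abs hi
  have h3 : 0 ≤ ∑ k ∈ Finset.univ.erase i, |v k - w k| := Finset.sum_nonneg fun k _ => abs_nonneg _
  have h4 : ∑ k ∈ Finset.univ.erase i, |v k - w k| = 0 := by omega
  have h5 : |v i - w i| = 1 := by omega
  rw [Finset.sum_eq_zero_iff_of_nonneg (fun k _ => abs_nonneg _)] at h4
  have h6 : ∀ k, k ≠ i → w k = v k := by
    intro k hk
    have := h4 k (by simp [hk])
    rw [abs_eq_zero] at this; omega
  rcases (abs_eq (by norm_num)).1 h5 with h7 | h7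
  · refine ⟨(i, false), ?_⟩
    ext k
    by_cases hk : k = i
    · subst hk; simp [nb]; omega
    · simp [nb, hk, h6 k hk]
  · refine ⟨(i, true), ?_⟩
    ext k
    by_cases hk : k = i
    · subst hk; simp [nb]; omega
    · simp [nb, hk, h6 k hk]

lemma nb_inj (v : V d) : Function.Injective (nb v) := by
  rintro ⟨i, b⟩ ⟨k, c⟩ h
  have hi := congrFun h i
  by_cases hik : i = k
  · subst hik
    cases b <;> cases c <;> simp [nb] at hi ⊢ <;> omega
  · cases b <;> cases c <;> simp [nb, hik] at hi

noncomputable def qq (d : ℕ) : ℝ≥0∞ := (2 * (d : ℝ≥0∞))⁻¹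

lemma qq_eq (hd : 0 < d) : qq d = ENNReal.ofReal (1 / (2 * (d : ℝ))) := by
  rw [qq, one_div, ENNReal.ofReal_inv_of_pos (by positivity), ENNReal.ofReal_mul (by norm_num)]
  simp

lemma qq_ne_zero : qq d ≠ 0 := by
  simp [qq, ENNReal.mul_eq_top]

lemma qq_ne_top (hd : 0 < d) : qq d ≠ ⊤ := by
  rw [qq_eq hd]; exact ENNReal.ofReal_ne_top

def PP (j : ℕ) (y z : V d) (l : List (V d)) : Prop :=
  l.IsChain adj ∧ l.head? = some y ∧ l.getLast? = some z ∧ l.length = j + 1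

noncomputable def PS (j : ℕ) (y z : V d) : ℝ≥0∞ :=
  ∑' l : List (V d), if PP j y z l then (qq d) ^ j else 0

lemma PS_le (hd : 0 < d) : ∀ (j : ℕ) (y z : V d), PS j y z ≤ ENNReal.ofReal (HH d j (z - y)) := by
  intro j
  induction j with
  | zero =>
    intro y z
    have key : ∀ l : List (V d), PP 0 y z l → l = [y] ∧ y = z := by
      rintro l ⟨_, h2, h3, h4⟩
      obtain ⟨a, rfl⟩ := List.length_eq_one_iff.1 h4
      simp at h2 h3; subst h2; subst h3; simp
    by_cases hyz : y = z
    · subst hyz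
      rw [sub_self, HH_zero, ENNReal.ofReal_one]
      calc PS 0 y y ≤ ∑' l : List (V d), if l = [y] then 1 else 0 := by
            unfold PS
            apply ENNReal.tsum_le_tsum
            intro l
            split_ifs with h1 h2
            · simp
            · exact absurd (key l h1).1 h2
            · simp
            · simp
        _ = 1 := tsum_ite_eq _ _
    · have : PS 0 y z = 0 := by
        rw [PS, ENNReal.tsum_eq_zero]
        intro l
        rw [if_neg]
        exact fun h => hyz (key l h).2
      rw [this]; exact zero_le
  | succ j ih =>
    intro y z
    have h1 : PS (j + 1) y z ≤ ∑' t : (Fin d × Bool) × List (V d),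
        qq d * (if PP j (nb y t.1) z t.2 then (qq d) ^ j else 0) := by
      apply tsum_le_surj _ _ (fun t => y :: t.2)
      intro l hl
      have hP : PP (j + 1) y z l := by
        by_contra hh; exact hl (if_neg hh)
      rw [if_pos hP]
      obtain ⟨c1, c2, c3, c4⟩ := hP
      match l, c1, c2, c3, c4 with
      | [], _, _, _, c4 => simp at c4
      | [a], _, _, _, c4 => simp at c4
      | a :: b :: t, c1, c2, c3, c4 =>
        simp at c2; subst c2
        rw [List.isChain_cons_cons] at c1
        obtain ⟨e, he⟩ := exists_nb c1.1
        refine ⟨(e, b :: t), rfl, ?_⟩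
        have : PP j (nb a e) z (b :: t) := by
          refine ⟨c1.2, by simp [he], ?_, by simpa using c4⟩
          rwa [List.getLast?_cons_cons] at c3
        simp only [if_pos this]
        rw [pow_succ, mul_comm]
    refine h1.trans ?_
    rw [ENNReal.tsum_mul_left, ENNReal.tsum_prod', tsum_fintype]
    calc _ ≤ qq d * ∑ e : Fin d × Bool, ENNReal.ofReal (HH d j (z - nb y e)) := by
          gcongr with e; exact ih (nb y e) z
      _ = ENNReal.ofReal ((1 / (2 * (d : ℝ))) * ∑ i, (HH d j (z - y - Pi.single i 1) + HH d j (z - y + Pi.single i 1))) := by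
          rw [qq_eq hd, ENNReal.ofReal_mul (by positivity), ← ENNReal.ofReal_sum_of_nonneg (fun e _ => HH_nonneg _ _ _),
            Fintype.sum_prod_type]
          congr 2
          apply Finset.sum_congr rfl
          intro i _
          simp only [Fintype.sum_bool, nb]
          simp only [if_true, Bool.false_eq_true, if_false]
          congr 2 <;> abel
      _ ≤ _ := ENNReal.ofReal_le_ofReal (HH_step d j _)

lemma loop_moment (hd : 0 < d) (B : Set (V d)) (y : V d) :
    ∑' l : List (V d), (if Loop B y l then ENNReal.ofReal ((l.length : ℝ) - 1) * (qq d) ^ l.length else 0)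
      ≤ qq d * ∑' j : ℕ, ENNReal.ofReal ((j : ℝ) * HH d j 0) := by
  calc _ ≤ ∑' t : ℕ × List (V d), qq d * ENNReal.ofReal (t.1 : ℝ) * (if PP t.1 y y t.2 then (qq d) ^ t.1 else 0) := by
        apply tsum_le_surj _ _ (fun t => t.2)
        intro l hl
        have hP : Loop B y l := by
          by_contra hh; exact hl (if_neg hh)
        have hne : 0 < l.length := by
          rw [List.length_pos_iff]; rintro rfl; simpa using hP.head
        refine ⟨(l.length - 1, l), rfl, ?_⟩
        have hPP : PP (l.length - 1) y y l := ⟨hP.chain, hP.head, hP.last, by omega⟩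
        rw [if_pos hP]
        simp only [if_pos hPP]
        obtain ⟨m, hm⟩ : ∃ m, l.length = m + 1 := ⟨l.length - 1, by omega⟩
        rw [hm]
        simp only [Nat.add_sub_cancel]
        push_cast
        rw [add_sub_cancel_right, pow_succ]
        apply le_of_eq; ring
    _ = ∑' j : ℕ, qq d * ENNReal.ofReal (j : ℝ) * PS j y y := by
        rw [ENNReal.tsum_prod']
        congr 1; ext j
        simp only
        rw [ENNReal.tsum_mul_left]; rfl
    _ ≤ ∑' j : ℕ, qq d * ENNReal.ofReal ((j : ℝ) * HH d j 0) := by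
        apply ENNReal.tsum_le_tsum
        intro j
        rw [ENNReal.ofReal_mul (by positivity), ← mul_assoc]
        gcongr
        simpa using PS_le hd j y y
    _ = _ := ENNReal.tsum_mul_left

lemma loopS_le (hd : 0 < d) (κ lam : ℝ) (hκ : 0 ≤ κ) (hlam : 0 ≤ lam)
    (hk : ∑' j : ℕ, ENNReal.ofReal ((j : ℝ) * HH d j 0) ≤ ENNReal.ofReal κ) (B : Set (V d)) (y : V d) :
    loopS (qq d) B y ≤ ENNReal.ofReal (Real.exp ((1 + κ) * lam)) *
      loopS (qq d * ENNReal.ofReal (Real.exp (-lam))) B y := by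
  set s := ENNReal.ofReal (Real.exp (-lam)) with hs
  set E := ENNReal.ofReal (Real.exp lam) with hE
  have hEs : E * s = 1 := by
    rw [hE, hs, ← ENNReal.ofReal_mul (Real.exp_pos _).le, ← Real.exp_add]; simp
  by_cases hy : y ∈ B
  · have h1 : loopS (qq d) B y ≤ E * loopS (qq d * s) B y +
        ENNReal.ofReal lam * ∑' l : List (V d), (if Loop B y l then ENNReal.ofReal ((l.length : ℝ) - 1) * (qq d) ^ l.length else 0) := by
      rw [loopS, loopS, ← ENNReal.tsum_mul_left, ← ENNReal.tsum_mul_left, ← ENNReal.tsum_add]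
      apply ENNReal.tsum_le_tsum
      intro l
      split_ifs with h
      · have hne : 0 < l.length := by
          rw [List.length_pos_iff]; rintro rfl; simpa using h.head
        obtain ⟨m, hm⟩ : ∃ m, l.length = m + 1 := ⟨l.length - 1, by omega⟩
        rw [hm]
        push_cast
        rw [add_sub_cancel_right]
        have e1 : E * (qq d * s) ^ (m + 1) = qq d ^ (m + 1) * s ^ m := by
          calc _ = (E * s) * (qq d ^ (m + 1) * s ^ m) := by ring
            _ = _ := by rw [hEs, one_mul]
        have e2 : ENNReal.ofReal lam * (ENNReal.ofReal (m : ℝ) * qq d ^ (m + 1)) =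
            qq d ^ (m + 1) * ENNReal.ofReal (lam * m) := by
          rw [ENNReal.ofReal_mul hlam]; ring
        rw [e1, e2, ← mul_add]
        have e3 : 1 ≤ s ^ m + ENNReal.ofReal (lam * m) := by
          rw [hs, ← ENNReal.ofReal_pow (Real.exp_pos _).le, ← ENNReal.ofReal_add (by positivity) (by positivity),
            ← Real.exp_nat_mul, ← ENNReal.ofReal_one]
          apply ENNReal.ofReal_le_ofReal
          have := Real.add_one_le_exp ((m : ℝ) * -lam)
          linarith
        calc _ = qq d ^ (m + 1) * 1 := (mul_one _).symm
          _ ≤ _ := by gcongr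
      · simp
    have h2 : qq d * s ≤ loopS (qq d * s) B y := by
      have hloop : Loop B y [y] := ⟨by simp, by simp, by simp, by simpa using hy⟩
      have := ENNReal.le_tsum (f := fun l => if Loop B y l then (qq d * s) ^ l.length else 0) [y]
      simp only [if_pos hloop, List.length_singleton, pow_one] at this
      exact this
    have h3 : qq d ≤ E * loopS (qq d * s) B y := by
      calc qq d = E * (qq d * s) := by
            rw [mul_left_comm, hEs, mul_one]
        _ ≤ _ := by gcongr
    calc _ ≤ _ := h1
      _ ≤ E * loopS (qq d * s) B y + ENNReal.ofReal lam * (E * loopS (qq d * s) B y * ENNReal.ofReal κ) := by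
        gcongr
        refine (loop_moment hd B y).trans ?_
        gcongr
      _ = (1 + ENNReal.ofReal lam * ENNReal.ofReal κ) * E * loopS (qq d * s) B y := by ring
      _ ≤ _ := by
        gcongr
        rw [hE, ← ENNReal.ofReal_mul hlam, ← ENNReal.ofReal_one, ← ENNReal.ofReal_add (by norm_num) (by positivity),
          ← ENNReal.ofReal_mul (by positivity)]
        apply ENNReal.ofReal_le_ofReal
        rw [show (1 + κ) * lam = κ * lam + lam by ring, Real.exp_add]
        gcongr
        have := Real.add_one_le_exp (κ * lam)
        linarith
  · have : loopS (qq d) B y = 0 := by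
      rw [loopS, ENNReal.tsum_eq_zero]
      intro l
      rw [if_neg]
      exact fun h => hy (h.mem y (List.mem_of_mem_head? h.head))
    rw [this]; exact zero_le

lemma gS_le (hd : 0 < d) (lam : ℝ) (A : Set (V d)) (y x : V d) :
    gS (qq d * ENNReal.ofReal (Real.exp (-lam))) A y x ≤
      qq d * ∑' j : ℕ, ENNReal.ofReal (Real.exp (-lam * ((j : ℝ) + 1)) * HH d j (x - y)) := by
  set s := ENNReal.ofReal (Real.exp (-lam)) with hs
  calc _ ≤ ∑' t : ℕ × List (V d), qq d * s ^ (t.1 + 1) * (if PP t.1 y x t.2 then (qq d) ^ t.1 else 0) := by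
        apply tsum_le_surj _ _ (fun t => t.2)
        intro l hl
        have hP : Walk A y x l := by
          by_contra hh; exact hl (if_neg hh)
        have hne : 0 < l.length := by
          rw [List.length_pos_iff]; rintro rfl; simpa using hP.head
        refine ⟨(l.length - 1, l), rfl, ?_⟩
        have hPP : PP (l.length - 1) y x l := by
          refine ⟨hP.chain, hP.head, ?_, by omega⟩
          obtain ⟨l', rfl, _⟩ := hP.last
          simp
        rw [if_pos hP]
        simp only [if_pos hPP]
        obtain ⟨m, hm⟩ : ∃ m, l.length = m + 1 := ⟨l.length - 1, by omega⟩
        rw [hm]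
        simp only [Nat.add_sub_cancel]
        apply le_of_eq; ring
    _ = ∑' j : ℕ, qq d * s ^ (j + 1) * PS j y x := by
        rw [ENNReal.tsum_prod']
        congr 1; ext j
        simp only
        rw [ENNReal.tsum_mul_left]; rfl
    _ ≤ ∑' j : ℕ, qq d * ENNReal.ofReal (Real.exp (-lam * ((j : ℝ) + 1)) * HH d j (x - y)) := by
        apply ENNReal.tsum_le_tsum
        intro j
        rw [ENNReal.ofReal_mul (by positivity), ← mul_assoc]
        have : s ^ (j + 1) = ENNReal.ofReal (Real.exp (-lam * ((j : ℝ) + 1))) := by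
          rw [hs, ← ENNReal.ofReal_pow (Real.exp_pos _).le, ← Real.exp_nat_mul]
          congr 2; push_cast; ring
        rw [this]
        gcongr
        exact PS_le hd j y x
    _ = _ := ENNReal.tsum_mul_left

end Paths
section Meas

def cyl (l : List (V d)) : Set (ℕ → V d) := { ω | (List.range l.length).map ω = l }

lemma cyl_mu {μ : Measure (ℕ → V d)} {y : V d} (hμ : IsSRWLaw μ y) (l : List (V d)) (m : ℕ)
    (hm : l.length = m + 1) (hc : l.IsChain adj) (hh : l.head? = some y) : μ (cyl l) = (qq d) ^ m := by
  have hg : ∀ i (hi : i < l.length), l.getD i y = l[i] := fun i hi => by simp [hi]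
  have h := hμ.2 m (fun i => l.getD i y) (by
    cases l with
    | nil => simp at hm
    | cons a t => simpa using hh) (by
    intro i hi
    have h1 : i + 1 < l.length := by omega
    show adj (l.getD i y) (l.getD (i+1) y)
    rw [hg i (by omega), hg (i + 1) h1]
    exact List.isChain_iff_getElem.1 hc i h1)
  rw [qq, ← h]
  congr 1
  ext ω
  simp only [cyl, Set.mem_setOf_eq]
  constructor
  · intro h1 i hi
    have h2 : i < l.length := by omega
    rw [hg i h2]
    have := congrArg (fun l' => l'[i]?) h1
    simpa [h2] using this
  · intro h1
    apply List.ext_getElem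
    · simp
    · intro i h2 h3
      rw [← hg i h3, ← h1 i (by omega)]
      simp

lemma cyl_meas (l : List (V d)) : MeasurableSet (cyl l) := by
  have : cyl l = ⋂ i : Fin l.length, {ω : ℕ → V d | ω i = l[i]} := by
    ext ω
    simp only [cyl, Set.mem_setOf_eq, Set.mem_iInter]
    constructor
    · intro h1 i
      have := congrArg (fun l' => l'[(i : ℕ)]?) h1
      simpa using this
    · intro h1
      apply List.ext_getElem
      · simp
      · intro i h2 h3
        simpa using h1 ⟨i, h3⟩
  rw [this]
  apply MeasurableSet.iInter
  intro i
  exact (measurable_pi_apply (i : ℕ)) (measurableSet_singleton _)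

lemma cyl_concat (l : List (V d)) (w : V d) : cyl (l ++ [w]) = cyl l ∩ {ω | ω l.length = w} := by
  ext ω
  simp only [cyl, Set.mem_setOf_eq, List.length_append, List.length_singleton, List.range_succ,
    List.map_append, List.map_cons, List.map_nil, Set.mem_inter_iff]
  constructor
  · intro h
    have := List.append_inj h (by simp)
    simpa using this
  · rintro ⟨h1, h2⟩
    rw [h1, h2]

lemma bad_null (hd : 0 < d) {μ : Measure (ℕ → V d)} {y : V d} (hμ : IsSRWLaw μ y) (l : List (V d)) (v : V d)
    (hc : l.IsChain adj) (hh : l.head? = some y) (hv : l.getLast? = some v) :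
    μ (cyl l ∩ {ω | ¬ adj v (ω l.length)}) = 0 := by
  obtain ⟨m, hm⟩ : ∃ m, l.length = m + 1 := ⟨l.length - 1, by
    have : 0 < l.length := by rw [List.length_pos_iff]; rintro rfl; simp at hh
    omega⟩
  have h1 : μ (cyl l) = (qq d) ^ m := cyl_mu hμ l m hm hc hh
  have h2 : ∀ e, μ (cyl (l ++ [nb v e])) = (qq d) ^ (m + 1) := by
    intro e
    apply cyl_mu hμ
    · simp [hm]
    · rw [List.isChain_append]
      refine ⟨hc, by simp, ?_⟩
      intro a ha b hb
      rw [hv] at ha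
      simp at ha hb
      subst ha; subst hb
      exact adj_nb _ _
    · rw [List.head?_append, hh]; rfl
  have hdisj : Pairwise (Function.onFun Disjoint (fun e => cyl (l ++ [nb v e]))) := by
    intro e e' hee
    rw [Function.onFun, Set.disjoint_left]
    intro ω h3 h4
    rw [cyl_concat] at h3 h4
    exact hee (nb_inj v (h3.2.symm.trans h4.2))
  have h3 : μ (⋃ e, cyl (l ++ [nb v e])) = (qq d) ^ m := by
    rw [measure_iUnion hdisj (fun e => cyl_meas _), tsum_fintype]
    simp only [h2, Finset.sum_const, Finset.card_univ, Fintype.card_prod, Fintype.card_fin, Fintype.card_bool,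
      nsmul_eq_mul]
    rw [pow_succ, mul_comm (qq d ^ m), ← mul_assoc]
    have : ((d * 2 : ℕ) : ℝ≥0∞) * qq d = 1 := by
      rw [qq]; push_cast; rw [mul_comm (d : ℝ≥0∞)]
      apply ENNReal.mul_inv_cancel
      · simp; omega
      · exact ENNReal.mul_ne_top (by simp) (by simp)
    rw [this, one_mul]
  have h4 : cyl l ∩ {ω | ¬ adj v (ω l.length)} ⊆ cyl l \ ⋃ e, cyl (l ++ [nb v e]) := by
    rintro ω ⟨h5, h6⟩
    refine ⟨h5, ?_⟩
    rw [Set.mem_iUnion]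
    rintro ⟨e, he⟩
    rw [cyl_concat] at he
    apply h6
    have : ω l.length = nb v e := he.2
    rw [this]; exact adj_nb _ _
  refine measure_mono_null h4 ?_
  have := hμ.1
  rw [measure_diff, h1, h3, tsub_self]
  · intro ω hω
    obtain ⟨e, he⟩ := Set.mem_iUnion.1 hω
    rw [cyl_concat] at he; exact he.1
  · exact (MeasurableSet.iUnion fun e => cyl_meas _).nullMeasurableSet
  · exact measure_ne_top _ _

lemma chain_map (ω : ℕ → V d) (n : ℕ) (h : ∀ i < n, adj (ω i) (ω (i + 1))) :
    ((List.range (n + 1)).map ω).IsChain adj := by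
  rw [List.isChain_iff_getElem]
  intro i hi
  simp at hi ⊢
  exact h i hi

lemma head_map (ω : ℕ → V d) (n : ℕ) : ((List.range (n + 1)).map ω).head? = some (ω 0) := by
  simp [List.range_succ_eq_map]

lemma ae_nn (hd : 0 < d) {μ : Measure (ℕ → V d)} {y : V d} (hμ : IsSRWLaw μ y) :
    ∀ᵐ ω ∂μ, ω 0 = y ∧ ∀ i, adj (ω i) (ω (i + 1)) := by
  have := hμ.1
  have h0 : ∀ᵐ ω ∂μ, ω 0 = y := by
    have h := cyl_mu hμ [y] 0 rfl (by simp) (by simp)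
    rw [pow_zero] at h
    have h' := (prob_compl_eq_zero_iff (cyl_meas [y])).2 h
    refine measure_mono_null ?_ h'
    intro ω hω h2
    apply hω
    simpa [cyl] using h2
  have h1 : ∀ᵐ ω ∂μ, ∀ l : List (V d), ∀ v : V d, l.IsChain adj → l.head? = some y → l.getLast? = some v →
      ω ∈ cyl l → adj v (ω l.length) := by
    rw [ae_all_iff]; intro l
    rw [ae_all_iff]; intro v
    by_cases hc : l.IsChain adj ∧ l.head? = some y ∧ l.getLast? = some v
    · refine measure_mono_null ?_ (bad_null hd hμ l v hc.1 hc.2.1 hc.2.2)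
      intro ω hω
      simp only [Set.mem_compl_iff, Set.mem_setOf_eq] at hω
      push Not at hω
      exact ⟨hω.2.2.2.1, hω.2.2.2.2⟩
    · refine Filter.Eventually.of_forall fun ω a b c => absurd ⟨a, b, c⟩ hc
  filter_upwards [h0, h1] with ω hω h2
  refine ⟨hω, ?_⟩
  intro n
  induction n using Nat.strong_induction_on with
  | _ n ih =>
    have := h2 ((List.range (n + 1)).map ω) (ω n) (chain_map ω n ih) (by rw [head_map, hω])
      (by rw [List.range_succ]; simp) (by simp [cyl])
    simpa using this

lemma mu_le (hd : 0 < d) {μ : Measure (ℕ → V d)} {y : V d} (hμ : IsSRWLaw μ y) (x : V d) (M : ℕ) :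
    qq d * μ { ω | (∃ j, ω j = x) ∧ (loopErase (stoppedAtPointList x ω)).length ≤ M } ≤
      fS (qq d) Set.univ y x M := by
  set N : Set (ℕ → V d) := {ω | ω 0 = y ∧ ∀ i, adj (ω i) (ω (i + 1))}
  have hN : μ Nᶜ = 0 := ae_nn hd hμ
  have hsub : { ω | (∃ j, ω j = x) ∧ (loopErase (stoppedAtPointList x ω)).length ≤ M } ⊆
      Nᶜ ∪ ⋃ l : List (V d), (if Walk Set.univ y x l ∧ (loopErase l).length ≤ M then cyl l else ∅) := by
    rintro ω ⟨hj, hle⟩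
    by_cases hω : ω ∈ N
    · right
      rw [Set.mem_iUnion]
      refine ⟨stoppedAtPointList x ω, ?_⟩
      have hj' : ∃ j, ω j ∈ ({x} : Set (V d)) := by simpa using hj
      have hidx : hitIdx ({x} : Set (V d)) ω = Nat.find hj' := by
        rw [hitIdx, hitTimeE, dif_pos hj', ENat.toNat_coe]; congr
      have hlist : stoppedAtPointList x ω = (List.range (Nat.find hj' + 1)).map ω := by
        rw [stoppedAtPointList, hidx]
      have hW : Walk Set.univ y x (stoppedAtPointList x ω) := by
        rw [hlist]
        refine ⟨chain_map ω _ (fun i _ => hω.2 i), by rw [head_map, hω.1], by simp, ?_⟩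
        refine ⟨(List.range (Nat.find hj')).map ω, ?_, ?_⟩
        · have : ω (Nat.find hj') = x := Nat.find_spec hj'
          rw [List.range_succ, List.map_append, List.map_singleton, this]
        · intro hx
          obtain ⟨i, hi, hix⟩ := List.mem_map.1 hx
          exact Nat.find_min hj' (List.mem_range.1 hi) hix
      rw [if_pos ⟨hW, hle⟩, hlist]
      simp [cyl]
    · left; exact hω
  have h1 : μ { ω | (∃ j, ω j = x) ∧ (loopErase (stoppedAtPointList x ω)).length ≤ M } ≤
      ∑' l : List (V d), μ (if Walk Set.univ y x l ∧ (loopErase l).length ≤ M then cyl l else ∅) := by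
    refine (measure_mono hsub).trans ((measure_union_le _ _).trans ?_)
    rw [hN, zero_add]
    exact measure_iUnion_le _
  calc _ ≤ qq d * _ := mul_le_mul_right h1 _
    _ = fS (qq d) Set.univ y x M := by
      rw [← ENNReal.tsum_mul_left, fS]
      congr 1; ext l
      split_ifs with h
      · obtain ⟨m, hm⟩ : ∃ m, l.length = m + 1 := ⟨l.length - 1, by
          have : 0 < l.length := by
            rw [List.length_pos_iff]; rintro rfl; simpa using h.1.head
          omega⟩
        rw [cyl_mu hμ l m hm h.1.chain h.1.head, hm, pow_succ, mul_comm]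
      · simp

end Meas
/-- Theorem 3.11.  Let `d ≥ 5`.  With `F(y,x,n)` the event that SRW from `y` hits `x`
in finite time and the loop erasure of the walk stopped at its first hit of `x` has at
most `n` steps, there are constants `C, c > 0` depending only on `d` such that
`P( F(y,x,n) ) ≤ C (1 + |x-y|)^{2-d} exp( -c |x-y|²/n )`. -/
theorem lerw_two_point_upper_bound :
    ∀ d : ℕ, 5 ≤ d → ∃ C c : ℝ, 0 < C ∧ 0 < c ∧
      ∀ (x y : V d) (n : ℕ), 1 ≤ n →
      ∀ μ : Measure (ℕ → V d), IsSRWLaw μ y →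
        (μ { ω | (∃ j, ω j = x) ∧
              (loopErase (stoppedAtPointList x ω)).length ≤ n + 1 }).toReal
          ≤ C * (1 + eudist x y) ^ ((2 : ℤ) - (d : ℤ)) *
              Real.exp (-c * (eudist x y) ^ 2 / (n : ℝ)) := by
  intro d hd
  have hd0 : 0 < d := by omega
  have hdR : (0 : ℝ) < d := by exact_mod_cast hd0
  obtain ⟨κ, hκ, hk⟩ := kappa_exists d hd
  have hK := KK_pos
  set C : ℝ := (KK * Real.sqrt d) ^ d * ((8 * (d : ℝ)) ^ d * 2 * 2 ^ (d - 2)) with hC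
  refine ⟨C, 1 / (32 * (1 + κ)), by positivity, by positivity, ?_⟩
  intro x y n hn μ hμ
  set r := eudist x y with hr
  have hr0 : 0 ≤ r := Real.sqrt_nonneg _
  have hnR : (1 : ℝ) ≤ n := by exact_mod_cast hn
  have hn0 : (0 : ℝ) < n := by linarith
  set θ : ℝ := 1 / (8 * (1 + κ)) with hθ
  have hθ0 : 0 < θ := by positivity
  set lam : ℝ := θ ^ 2 * r ^ 2 / (n : ℝ) ^ 2 with hlam
  have hlam0 : 0 ≤ lam := by positivity
  have hx : ∑ i, (((x - y) i : ℤ) : ℝ) ^ 2 = r ^ 2 := by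
    rw [hr, eudist, Real.sq_sqrt (Finset.sum_nonneg fun i _ => sq_nonneg _)]
    simp
  have h1 := mu_le hd0 hμ x (n + 1)
  have h2 := fS_le (qq d) (qq d * ENNReal.ofReal (Real.exp (-lam))) (ENNReal.ofReal (Real.exp ((1 + κ) * lam)))
    (by rw [← ENNReal.ofReal_one]
        exact ENNReal.ofReal_le_ofReal (Real.one_le_exp (by positivity)))
    (by
      rw [mul_left_comm, ← ENNReal.ofReal_mul (Real.exp_pos _).le, ← Real.exp_add]
      have : (1 : ℝ≥0∞) ≤ ENNReal.ofReal (Real.exp ((1 + κ) * lam + -lam)) := by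
        rw [← ENNReal.ofReal_one]
        exact ENNReal.ofReal_le_ofReal (Real.one_le_exp (by nlinarith [mul_nonneg hκ hlam0]))
      calc qq d = qq d * 1 := (mul_one _).symm
        _ ≤ _ := by gcongr)
    (fun B v => loopS_le hd0 κ lam hκ hlam0 hk B v) x (n + 1) Set.univ y
  have h3 := gS_le hd0 lam Set.univ y x
  have h4 := green_bound d hd (x - y) r hr0 hx θ hθ0 n hn0
  rw [← hlam, ← hC] at h4
  set P := μ { ω | (∃ j, ω j = x) ∧ (loopErase (stoppedAtPointList x ω)).length ≤ n + 1 }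
  have h5 : qq d * P ≤ qq d * (ENNReal.ofReal (Real.exp ((1 + κ) * lam)) ^ (n + 1) *
      ENNReal.ofReal (C * (1 + r) ^ ((2 : ℤ) - (d : ℤ)) * Real.exp (-(θ * r ^ 2 / (2 * n))))) := by
    refine h1.trans (h2.trans ?_)
    rw [mul_left_comm]
    gcongr
    exact h3.trans (by gcongr)
  have h6 := (ENNReal.mul_le_mul_iff_right qq_ne_zero (qq_ne_top hd0)).1 h5
  rw [← ENNReal.ofReal_pow (Real.exp_pos _).le, ← ENNReal.ofReal_mul (by positivity)] at h6
  have h7 := ENNReal.toReal_mono ENNReal.ofReal_ne_top h6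
  rw [ENNReal.toReal_ofReal (by positivity)] at h7
  refine h7.trans ?_
  rw [← Real.exp_nat_mul]
  have h8 : Real.exp (((n + 1 : ℕ) : ℝ) * ((1 + κ) * lam)) * Real.exp (-(θ * r ^ 2 / (2 * n)))
      ≤ Real.exp (-(1 / (32 * (1 + κ))) * r ^ 2 / n) := by
    rw [← Real.exp_add]
    apply Real.exp_le_exp.2
    push_cast
    have a1 : ((n : ℝ) + 1) * ((1 + κ) * lam) ≤ (2 * n) * ((1 + κ) * lam) := by
      gcongr; linarith
    have a2 : (2 * n) * ((1 + κ) * lam) + -(θ * r ^ 2 / (2 * n)) = -(1 / (32 * (1 + κ))) * r ^ 2 / n := by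
      rw [hlam, hθ]
      have : 1 + κ ≠ 0 := by positivity
      field_simp
      ring
    linarith
  have h9 : 0 ≤ C * (1 + r) ^ ((2 : ℤ) - (d : ℤ)) := by positivity
  calc _ = C * (1 + r) ^ ((2 : ℤ) - (d : ℤ)) * (Real.exp (((n + 1 : ℕ) : ℝ) * ((1 + κ) * lam)) * Real.exp (-(θ * r ^ 2 / (2 * n)))) := by ring
    _ ≤ _ := mul_le_mul_of_nonneg_left h8 h9

end USFPaper
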